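/- arXiv:1503.06982 — 3 statements merged into one kernel-verified Lean document; each statement's English description precedes it below -/
import Mathlib

section
/- (Dual Γ4 identity from the proof of Lemma 1.) Let b : [0,1] → ℝ be continuous, K1, K2 : [0,1]² → ℝ continuously differentiable with K1(x,ξ) = K2(ξ,x) for all x, ξ, and z : [0,1] → ℝ continuous. Then ∫₀¹ z(x)·b(x)·(d/dx)[∫₀^x K1(x,ξ)z(ξ)dξ + ∫_x^1 K2(x,ξ)z(ξ)dξ] dx = (1/2)∫₀¹∫₀^x z(x)·[b(x)·∂K1/∂x(x,ξ) + b(ξ)·∂K1/∂ξ(x,ξ)]·z(ξ) dξ dx + (1/2)∫₀¹∫_x^1 z(x)·[b(x)·∂K2/∂x(x,ξ) + b(ξ)·∂K2/∂ξ(x,ξ)]·z(ξ) dξ dx. -/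
open MeasureTheory

/-!
Write `K = K1`, so that `K2` is the transpose of `K`. Since the two kernels agree on the diagonal,
the boundary terms of the Leibniz rule cancel, and the left-hand side is the integral of
`z(x) b(x) ∂K/∂x(x,ξ) z(ξ)` over the triangle `ξ ≤ x` plus that of `z(x) b(x) ∂K/∂ξ(ξ,x) z(ξ)` over
`x ≤ ξ`. Reflecting the second triangle onto the first turns the sum into the integral over
`ξ ≤ x` of `z(x) (b(x) ∂K/∂x + b(ξ) ∂K/∂ξ) z(ξ)`. The same reflection shows that the two double
integrals on the right-hand side are equal, so their average is this integral too.
-/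

open Function

section PartialDerivatives

variable {𝕜 E F : Type*} [NontriviallyNormedField 𝕜] [NormedAddCommGroup E] [NormedSpace 𝕜 E]
  [NormedAddCommGroup F] [NormedSpace 𝕜 F]

lemma continuous_uncurry_deriv_left {K : 𝕜 → E → F} (hK : ContDiff 𝕜 1 (uncurry K)) :
    Continuous (uncurry fun x ξ => deriv (fun t => K t ξ) x) := by
  have hflip : ContDiff 𝕜 1 (uncurry fun (p : 𝕜 × E) t => K t p.2) :=
    hK.comp (contDiff_snd.prodMk (contDiff_snd.comp contDiff_fst))
  have hfderiv : ContDiff 𝕜 0 fun p : 𝕜 × E => fderiv 𝕜 (fun t => K t p.2) p.1 :=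
    hflip.fderiv contDiff_fst (by simp)
  exact hfderiv.continuous.clm_apply continuous_const

lemma continuous_uncurry_deriv_right {K : E → 𝕜 → F} (hK : ContDiff 𝕜 1 (uncurry K)) :
    Continuous (uncurry fun x ξ => deriv (fun s => K x s) ξ) :=
  have hswap : ContDiff 𝕜 1 (uncurry fun ξ x => K x ξ) :=
    hK.comp (contDiff_snd.prodMk contDiff_fst)
  (continuous_uncurry_deriv_left hswap).comp continuous_swap

lemma hasDerivAt_left_of_differentiable_uncurry {K : 𝕜 → E → F}
    (hK : Differentiable 𝕜 (uncurry K)) (x : 𝕜) (ξ : E) :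
    HasDerivAt (fun t => K t ξ) (deriv (fun t => K t ξ) x) x :=
  have hline : Differentiable 𝕜 fun t => K t ξ :=
    hK.comp (differentiable_id.prodMk (differentiable_const ξ))
  (hline x).hasDerivAt

lemma hasDerivAt_right_of_differentiable_uncurry {K : E → 𝕜 → F}
    (hK : Differentiable 𝕜 (uncurry K)) (x : E) (ξ : 𝕜) :
    HasDerivAt (fun s => K x s) (deriv (fun s => K x s) ξ) ξ :=
  have hline : Differentiable 𝕜 fun s => K x s :=
    hK.comp ((differentiable_const x).prodMk differentiable_id)
  (hline ξ).hasDerivAt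

end PartialDerivatives

section Leibniz

lemma hasDerivAt_intervalIntegral_of_continuous {𝕜 E : Type*} [RCLike 𝕜]
    [NormedAddCommGroup E] [NormedSpace ℝ E] [NormedSpace 𝕜 E]
    {μ : Measure ℝ} [IsLocallyFiniteMeasure μ] {f f' : 𝕜 → ℝ → E}
    (hf : ∀ t, Continuous (f t)) (hf' : Continuous (uncurry f'))
    (hderiv : ∀ t s, HasDerivAt (fun t => f t s) (f' t s) t) (a b : ℝ) (x : 𝕜) :
    HasDerivAt (fun t => ∫ s in a..b, f t s ∂μ) (∫ s in a..b, f' x s ∂μ) x := by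
  obtain ⟨C, hC⟩ := ((isCompact_closedBall x 1).prod
    (isCompact_uIcc (a := a) (b := b))).exists_bound_of_continuousOn hf'.continuousOn
  exact (intervalIntegral.hasDerivAt_integral_of_dominated_loc_of_deriv_le
    (bound := fun _ => C) (Metric.closedBall_mem_nhds x one_pos)
    (.of_forall fun t => (hf t).aestronglyMeasurable)
    ((hf x).intervalIntegrable a b)
    (hf'.uncurry_left x).aestronglyMeasurable
    (.of_forall fun s hs t ht => hC (t, s) ⟨ht, Set.uIoc_subset_uIcc hs⟩)
    intervalIntegrable_const
    (.of_forall fun s _ t _ => hderiv t s)).2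

variable {E : Type*} [NormedAddCommGroup E] [NormedSpace ℝ E]

lemma continuous_integral_moving_right {f : ℝ → ℝ → E} (hf : Continuous (uncurry f)) (a : ℝ) :
    Continuous fun x => ∫ ξ in a..x, f x ξ :=
  intervalIntegral.continuous_parametric_intervalIntegral_of_continuous hf continuous_id

lemma continuous_integral_moving_left {f : ℝ → ℝ → E} (hf : Continuous (uncurry f)) (c : ℝ) :
    Continuous fun x => ∫ ξ in x..c, f x ξ := by
  simp only [intervalIntegral.integral_symm c]
  exact (continuous_integral_moving_right hf c).neg

variable [CompleteSpace E]

-- The two-variable function `(t, u) ↦ ∫ s in a..u, f t s` has continuous partial derivatives,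
-- hence is differentiable; restrict it to the diagonal.
lemma hasDerivAt_integral_moving_right {f f' : ℝ → ℝ → E} (hf : Continuous (uncurry f))
    (hf' : Continuous (uncurry f')) (hderiv : ∀ t s, HasDerivAt (fun t => f t s) (f' t s) t)
    (a x : ℝ) :
    HasDerivAt (fun t => ∫ s in a..t, f t s) (f x x + ∫ s in a..x, f' x s) x := by
  have hpartial₁ (p : ℝ × ℝ) :
      HasDerivAt (fun t => ∫ s in a..p.2, f t s) (∫ s in a..p.2, f' p.1 s) p.1 :=
    hasDerivAt_intervalIntegral_of_continuous hf.uncurry_left hf' hderiv a p.2 p.1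
  have hpartial₂ (p : ℝ × ℝ) : HasDerivAt (fun u => ∫ s in a..u, f p.1 s) (f p.1 p.2) p.2 :=
    ((hf.uncurry_left p.1).integral_hasStrictDerivAt a p.2).hasDerivAt
  have hcont₁ : Continuous fun p : ℝ × ℝ => ∫ s in a..p.2, f' p.1 s :=
    intervalIntegral.continuous_parametric_primitive_of_continuous hf'
  have hspan : Continuous (ContinuousLinearMap.toSpanSingleton ℝ : E → ℝ →L[ℝ] E) :=
    (ContinuousLinearMap.toSpanSingletonCLE (𝕜 := ℝ) (E := E)).continuous
  have hjoint := hasStrictFDerivAt_uncurry_coprod (𝕜 := ℝ) (u := (x, x))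
    (f := fun t u => ∫ s in a..u, f t s)
    (f₁ := fun t u => .toSpanSingleton ℝ (∫ s in a..u, f' t s))
    (f₂ := fun t u => .toSpanSingleton ℝ (f t u))
    (.of_forall fun p => (hpartial₁ p).hasFDerivAt)
    (.of_forall fun p => (hpartial₂ p).hasFDerivAt)
    (hspan.comp hcont₁).continuousAt (hspan.comp hf).continuousAt
  have hdiag : HasDerivAt (fun t : ℝ => (t, t)) (1, 1) x :=
    (hasDerivAt_id x).prodMk (hasDerivAt_id x)
  simpa [HasUncurry.uncurry, comp_def, add_comm] using
    HasFDerivAt.comp_hasDerivAt (f := fun t : ℝ => (t, t)) x hjoint.hasFDerivAt hdiag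

lemma hasDerivAt_integral_moving_right_add_left {f f' g g' : ℝ → ℝ → E}
    (hf : Continuous (uncurry f)) (hf' : Continuous (uncurry f'))
    (hfderiv : ∀ t s, HasDerivAt (fun t => f t s) (f' t s) t)
    (hg : Continuous (uncurry g)) (hg' : Continuous (uncurry g'))
    (hgderiv : ∀ t s, HasDerivAt (fun t => g t s) (g' t s) t)
    {x : ℝ} (hfg : f x x = g x x) (a c : ℝ) :
    HasDerivAt (fun t => (∫ s in a..t, f t s) + ∫ s in t..c, g t s)
      ((∫ s in a..x, f' x s) + ∫ s in x..c, g' x s) x := by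
  simp only [intervalIntegral.integral_symm c]
  convert! (hasDerivAt_integral_moving_right hf hf' hfderiv a x).add
    (hasDerivAt_integral_moving_right hg hg' hgderiv c x).neg using 1
  rw [hfg]
  abel

end Leibniz

section Triangle

variable {E : Type*} [NormedAddCommGroup E] [NormedSpace ℝ E] [CompleteSpace E]

-- By the Leibniz rule, the right-hand side is a primitive in `c` of the inner integral on the left.
lemma integral_integral_swap_triangle {f : ℝ → ℝ → E} (hf : Continuous (uncurry f)) (a c : ℝ) :
    ∫ x in a..c, ∫ ξ in a..x, f x ξ = ∫ ξ in a..c, ∫ x in ξ..c, f x ξ := by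
  have hslice (ξ : ℝ) : Continuous fun x => f x ξ := hf.uncurry_right ξ
  have hinner : Continuous (uncurry fun y ξ => ∫ x in ξ..y, f x ξ) := by
    have hprim : Continuous fun p : ℝ × ℝ => ∫ x in a..p.2, f x p.1 :=
      intervalIntegral.continuous_parametric_primitive_of_continuous
        (f := fun ξ x => f x ξ) (hf.comp continuous_swap)
    have hsplit (y ξ : ℝ) :
        ∫ x in ξ..y, f x ξ = (∫ x in a..y, f x ξ) - ∫ x in a..ξ, f x ξ :=
      (intervalIntegral.integral_interval_sub_left ((hslice ξ).intervalIntegrable a y)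
        ((hslice ξ).intervalIntegrable a ξ)).symm
    simp only [hsplit]
    exact (hprim.comp continuous_swap).sub (hprim.comp (continuous_snd.prodMk continuous_snd))
  have houter (y : ℝ) : HasDerivAt (fun y => ∫ ξ in a..y, ∫ x in ξ..y, f x ξ)
      (∫ ξ in a..y, f y ξ) y := by
    simpa using hasDerivAt_integral_moving_right hinner hf
      (fun t s => ((hslice s).integral_hasStrictDerivAt s t).hasDerivAt) a y
  simpa using intervalIntegral.integral_eq_sub_of_hasDerivAt (fun y _ => houter y)
    ((continuous_integral_moving_right hf a).intervalIntegrable a c)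

lemma integral_lower_add_upper_triangle {f g : ℝ → ℝ → E} (hf : Continuous (uncurry f))
    (hg : Continuous (uncurry g)) (a c : ℝ) :
    ∫ x in a..c, ((∫ ξ in a..x, f x ξ) + ∫ ξ in x..c, g x ξ) =
      ∫ x in a..c, ∫ ξ in a..x, (f x ξ + g ξ x) := by
  have hg_swap : Continuous (uncurry fun x ξ => g ξ x) := hg.comp continuous_swap
  calc ∫ x in a..c, ((∫ ξ in a..x, f x ξ) + ∫ ξ in x..c, g x ξ)
      = (∫ x in a..c, ∫ ξ in a..x, f x ξ) + ∫ x in a..c, ∫ ξ in x..c, g x ξ :=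
        intervalIntegral.integral_add
          ((continuous_integral_moving_right hf a).intervalIntegrable a c)
          ((continuous_integral_moving_left hg c).intervalIntegrable a c)
    _ = (∫ x in a..c, ∫ ξ in a..x, f x ξ) + ∫ x in a..c, ∫ ξ in a..x, g ξ x := by
        rw [integral_integral_swap_triangle hg_swap]
    _ = ∫ x in a..c, ((∫ ξ in a..x, f x ξ) + ∫ ξ in a..x, g ξ x) :=
        (intervalIntegral.integral_add
          ((continuous_integral_moving_right hf a).intervalIntegrable a c)
          ((continuous_integral_moving_right hg_swap a).intervalIntegrable a c)).symm
    _ = ∫ x in a..c, ∫ ξ in a..x, (f x ξ + g ξ x) := by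
        congr with x
        exact (intervalIntegral.integral_add
          ((hf.uncurry_left x).intervalIntegrable a x)
          ((hg_swap.uncurry_left x).intervalIntegrable a x)).symm

end Triangle

section TransposedKernel

/-- The derivative of the kernel `K` along the vector field `b(x) ∂/∂x + b(ξ) ∂/∂ξ` on the plane;
this is the bracket in the Γ₄ identity. -/
noncomputable def transportDeriv (b : ℝ → ℝ) (K : ℝ → ℝ → ℝ) (x ξ : ℝ) : ℝ :=
  b x * deriv (fun t => K t ξ) x + b ξ * deriv (fun s => K x s) ξ

lemma transportDeriv_transpose (b : ℝ → ℝ) (K : ℝ → ℝ → ℝ) (x ξ : ℝ) :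
    transportDeriv b (fun x ξ => K ξ x) x ξ = transportDeriv b K ξ x :=
  add_comm _ _

variable {b z : ℝ → ℝ} {K : ℝ → ℝ → ℝ}

lemma continuous_uncurry_transportDeriv (hb : Continuous b) (hK : ContDiff ℝ 1 (uncurry K)) :
    Continuous (uncurry (transportDeriv b K)) :=
  ((hb.comp continuous_fst).mul (continuous_uncurry_deriv_left hK)).add
    ((hb.comp continuous_snd).mul (continuous_uncurry_deriv_right hK))

lemma hasDerivAt_integral_kernel_add_transpose (hz : Continuous z)
    (hK : ContDiff ℝ 1 (uncurry K)) (a c x : ℝ) :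
    HasDerivAt (fun t => (∫ ξ in a..t, K t ξ * z ξ) + ∫ ξ in t..c, K ξ t * z ξ)
      ((∫ ξ in a..x, deriv (fun t => K t ξ) x * z ξ) +
        ∫ ξ in x..c, deriv (fun s => K ξ s) x * z ξ) x := by
  have hdiff : Differentiable ℝ (uncurry K) := hK.differentiable one_ne_zero
  have hz_snd : Continuous fun p : ℝ × ℝ => z p.2 := hz.comp continuous_snd
  exact hasDerivAt_integral_moving_right_add_left
    (f := fun t ξ => K t ξ * z ξ) (f' := fun t ξ => deriv (fun t => K t ξ) t * z ξ)
    (g := fun t ξ => K ξ t * z ξ) (g' := fun t ξ => deriv (fun s => K ξ s) t * z ξ)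
    (hK.continuous.mul hz_snd)
    ((continuous_uncurry_deriv_left hK).mul hz_snd)
    (fun t ξ => (hasDerivAt_left_of_differentiable_uncurry hdiff t ξ).mul_const (z ξ))
    ((hK.continuous.comp continuous_swap).mul hz_snd)
    (((continuous_uncurry_deriv_right hK).comp continuous_swap).mul hz_snd)
    (fun t ξ => (hasDerivAt_right_of_differentiable_uncurry hdiff ξ t).mul_const (z ξ))
    rfl a c

lemma integral_mul_deriv_integral_kernel_add_transpose (hb : Continuous b) (hz : Continuous z)
    (hK : ContDiff ℝ 1 (uncurry K)) (a c : ℝ) :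
    ∫ x in a..c, z x * b x *
        deriv (fun t => (∫ ξ in a..t, K t ξ * z ξ) + ∫ ξ in t..c, K ξ t * z ξ) x =
      ∫ x in a..c, ∫ ξ in a..x, z x * transportDeriv b K x ξ * z ξ := by
  set Kx : ℝ → ℝ → ℝ := fun x ξ => deriv (fun t => K t ξ) x
  set Kξ : ℝ → ℝ → ℝ := fun x ξ => deriv (fun s => K x s) ξ
  have hKx : Continuous (uncurry Kx) := continuous_uncurry_deriv_left hK
  have hKξ : Continuous (uncurry Kξ) := continuous_uncurry_deriv_right hK
  calc ∫ x in a..c, z x * b x *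
        deriv (fun t => (∫ ξ in a..t, K t ξ * z ξ) + ∫ ξ in t..c, K ξ t * z ξ) x
      = ∫ x in a..c, z x * b x * ((∫ ξ in a..x, Kx x ξ * z ξ) + ∫ ξ in x..c, Kξ ξ x * z ξ) := by
        simp only [(hasDerivAt_integral_kernel_add_transpose hz hK a c _).deriv, Kx, Kξ]
    _ = ∫ x in a..c, ((∫ ξ in a..x, z x * b x * (Kx x ξ * z ξ)) +
          ∫ ξ in x..c, z x * b x * (Kξ ξ x * z ξ)) := by
        simp only [mul_add, intervalIntegral.integral_const_mul]
    _ = ∫ x in a..c, ∫ ξ in a..x,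
          (z x * b x * (Kx x ξ * z ξ) + z ξ * b ξ * (Kξ x ξ * z x)) :=
        integral_lower_add_upper_triangle (f := fun x ξ => z x * b x * (Kx x ξ * z ξ))
          (g := fun x ξ => z x * b x * (Kξ ξ x * z ξ)) (by fun_prop) (by fun_prop) a c
    _ = ∫ x in a..c, ∫ ξ in a..x, z x * transportDeriv b K x ξ * z ξ := by
        congr! 4 with x ξ
        simp only [transportDeriv, Kx, Kξ]
        ring

lemma integral_integral_transportDeriv_transpose (hb : Continuous b) (hz : Continuous z)
    (hK : ContDiff ℝ 1 (uncurry K)) (a c : ℝ) :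
    ∫ x in a..c, ∫ ξ in x..c, z x * transportDeriv b (fun x ξ => K ξ x) x ξ * z ξ =
      ∫ x in a..c, ∫ ξ in a..x, z x * transportDeriv b K x ξ * z ξ := by
  have hform : Continuous (uncurry fun x ξ => z x * transportDeriv b K x ξ * z ξ) :=
    ((hz.comp continuous_fst).mul (continuous_uncurry_transportDeriv hb hK)).mul
      (hz.comp continuous_snd)
  rw [integral_integral_swap_triangle hform]
  congr! 4 with x ξ
  rw [transportDeriv_transpose]
  ring

end TransposedKernel

theorem dual_gamma4_identity_general {b z : ℝ → ℝ} (hb : Continuous b) (hz : Continuous z)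
    {K1 K2 : ℝ → ℝ → ℝ} (hK1 : ContDiff ℝ 1 (uncurry K1)) (hsym : ∀ x ξ, K1 x ξ = K2 ξ x)
    (a c : ℝ) :
    ∫ x in a..c, z x * b x *
        deriv (fun t => (∫ ξ in a..t, K1 t ξ * z ξ) + ∫ ξ in t..c, K2 t ξ * z ξ) x =
      (1 / 2) * (∫ x in a..c, ∫ ξ in a..x, z x * transportDeriv b K1 x ξ * z ξ) +
        (1 / 2) * ∫ x in a..c, ∫ ξ in x..c, z x * transportDeriv b K2 x ξ * z ξ := by
  obtain rfl : K2 = fun x ξ => K1 ξ x := funext₂ fun x ξ => (hsym ξ x).symm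
  rw [integral_mul_deriv_integral_kernel_add_transpose hb hz hK1,
    integral_integral_transportDeriv_transpose hb hz hK1]
  ring

/-- Dual Γ₄ identity from the proof of Lemma 1. -/
theorem dual_gamma4_identity
    (b : ℝ → ℝ) (hb : Continuous b)
    (K1 K2 : ℝ → ℝ → ℝ)
    (hK1 : ContDiff ℝ 1 (fun p : ℝ × ℝ => K1 p.1 p.2))
    (hK2 : ContDiff ℝ 1 (fun p : ℝ × ℝ => K2 p.1 p.2))
    (hsym : ∀ x ξ : ℝ, K1 x ξ = K2 ξ x)
    (z : ℝ → ℝ) (hz : Continuous z) :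
    (∫ x in (0:ℝ)..1, z x * b x *
        deriv
          (fun t => (∫ ξ in (0:ℝ)..t, K1 t ξ * z ξ)
            + ∫ ξ in t..(1:ℝ), K2 t ξ * z ξ) x)
      = (1/2) * (∫ x in (0:ℝ)..1, ∫ ξ in (0:ℝ)..x,
            z x * (b x * deriv (fun t => K1 t ξ) x
              + b ξ * deriv (fun s => K1 x s) ξ) * z ξ)
        + (1/2) * (∫ x in (0:ℝ)..1, ∫ ξ in x..(1:ℝ),
            z x * (b x * deriv (fun t => K2 t ξ) x
              + b ξ * deriv (fun s => K2 x s) ξ) * z ξ) := by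
  exact dual_gamma4_identity_general hb hz hK1 hsym 0 1
end

section
/- (Primal Γ1 estimate from the proof of Lemma 2.) Let a, N : [0,1] → ℝ be twice continuously differentiable with a(x)N(x) ≥ αε1 on [0,1] for some α, ε1 > 0, and let w : [0,1] → ℝ be twice continuously differentiable with w'(0) = 0. Then ∫₀¹ w''(x)·a(x)·N(x)·w(x) dx ≤ (1/2)∫₀¹ w(x)²·[ (a·N)''(x) − (π²/2)αε1 ] dx + (π²/2)αε1·w(0)·∫₀¹ w(x) dx − (1/2)(a'(1)N(1) + a(1)N'(1))·w(1)² + (1/2)(a'(0)N(0) + a(0)N'(0) − (π²/2)αε1)·w(0)² + w'(1)·a(1)·N(1)·w(1). -/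
open MeasureTheory Real

/-!
Two integrations by parts turn `∫ w'' p w` into boundary terms plus `½ ∫ p'' w² - ∫ p w'²`.
The lower bound on `p` and Wirtinger's inequality for `w - w l`, which vanishes at the left endpoint
only, then bound the energy `∫ p w'²` from below.

Wirtinger's inequality itself comes from completing a square: if `q' + q² + V ≤ 0`, then
`(q f²)' ≤ f'² - V f²`. For the constant potential `V = k²` the Riccati equation is solved on
`[l, r]` by `q x = k tan (k (r - x))`, as long as `k (r - l) < π / 2`, and `q r = 0`.
-/

open Set Filter Topology

section Wirtinger

variable {l r : ℝ} {f f' : ℝ → ℝ}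

lemma sub_le_integral_sq_sub_mul_sq_of_riccati {q q' V : ℝ → ℝ} (hlr : l ≤ r)
    (hf : ContinuousOn f (Icc l r)) (hff' : ∀ x ∈ Ioo l r, HasDerivAt f (f' x) x)
    (hq : ContinuousOn q (Icc l r)) (hqq' : ∀ x ∈ Ioo l r, HasDerivAt q (q' x) x)
    (riccati : ∀ x ∈ Ioo l r, q' x + q x ^ 2 + V x ≤ 0)
    (hint : IntervalIntegrable (fun x ↦ f' x ^ 2 - V x * f x ^ 2) volume l r) :
    q r * f r ^ 2 - q l * f l ^ 2 ≤ ∫ x in l..r, (f' x ^ 2 - V x * f x ^ 2) := by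
  refine intervalIntegral.sub_le_integral_of_hasDeriv_right_of_le hlr (hq.mul (hf.pow 2))
    (fun x hx ↦ ((hqq' x hx).mul ((hff' x hx).pow 2)).hasDerivWithinAt)
    ((intervalIntegrable_iff_integrableOn_Icc_of_le hlr).1 hint) fun x hx ↦ ?_
  have square_nonneg : 0 ≤ (f' x - q x * f x) ^ 2 := sq_nonneg _
  have potential_nonpos : (q' x + q x ^ 2 + V x) * f x ^ 2 ≤ 0 :=
    mul_nonpos_of_nonpos_of_nonneg (riccati x hx) (sq_nonneg _)
  simp only [Pi.pow_apply]
  linear_combination square_nonneg + potential_nonpos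

lemma hasDerivAt_mul_tan_mul_sub {k x : ℝ} (hcos : cos (k * (r - x)) ≠ 0) :
    HasDerivAt (fun y ↦ k * tan (k * (r - y))) (-(k ^ 2 + (k * tan (k * (r - x))) ^ 2)) x := by
  have inner : HasDerivAt (fun y ↦ k * (r - y)) (-k) x := by
    simpa using ((hasDerivAt_id x).const_sub r).const_mul k
  refine (((hasDerivAt_tan hcos).comp x inner).const_mul k).congr_deriv ?_
  rw [← inv_one_add_tan_sq hcos, one_div, inv_inv]
  ring

lemma sq_mul_integral_sq_le_of_mul_lt_pi_div_two {k : ℝ} (hlr : l ≤ r) (hk : 0 ≤ k)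
    (hkπ : k * (r - l) < π / 2)
    (hf : ContinuousOn f (Icc l r)) (hff' : ∀ x ∈ Ioo l r, HasDerivAt f (f' x) x)
    (hf' : IntervalIntegrable (fun x ↦ f' x ^ 2) volume l r) (hfl : f l = 0) :
    k ^ 2 * ∫ x in l..r, f x ^ 2 ≤ ∫ x in l..r, f' x ^ 2 := by
  have hcos : ∀ x ∈ Icc l r, cos (k * (r - x)) ≠ 0 := fun x hx ↦ by
    have lower : 0 ≤ k * (r - x) := mul_nonneg hk (sub_nonneg.2 hx.2)
    have upper : k * (r - x) ≤ k * (r - l) := by gcongr; exact hx.1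
    exact (cos_pos_of_mem_Ioo ⟨by linarith [pi_pos], upper.trans_lt hkπ⟩).ne'
  have hf2 : IntervalIntegrable (fun x ↦ k ^ 2 * f x ^ 2) volume l r :=
    ((hf.pow 2).const_mul _).intervalIntegrable_of_Icc hlr
  have energy := sub_le_integral_sq_sub_mul_sq_of_riccati (V := fun _ ↦ k ^ 2) hlr hf hff'
    (fun x hx ↦ (hasDerivAt_mul_tan_mul_sub (hcos x hx)).continuousAt.continuousWithinAt)
    (fun x hx ↦ hasDerivAt_mul_tan_mul_sub (hcos x (Ioo_subset_Icc_self hx)))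
    (fun x _ ↦ by linarith) (hf'.sub hf2)
  rw [intervalIntegral.integral_sub hf' hf2, intervalIntegral.integral_const_mul] at energy
  simpa [hfl] using energy

theorem wirtinger_inequality_of_left_eq_zero (hlr : l < r)
    (hf : ContinuousOn f (Icc l r)) (hff' : ∀ x ∈ Ioo l r, HasDerivAt f (f' x) x)
    (hf' : IntervalIntegrable (fun x ↦ f' x ^ 2) volume l r) (hfl : f l = 0) :
    (π / (2 * (r - l))) ^ 2 * ∫ x in l..r, f x ^ 2 ≤ ∫ x in l..r, f' x ^ 2 := by
  have hlen : 0 < r - l := sub_pos.2 hlr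
  have subcritical : ∀ᶠ k in 𝓝[<] (π / (2 * (r - l))), 0 < k ∧ k < π / (2 * (r - l)) :=
    Ioo_mem_nhdsLT (by positivity)
  have hlim : Tendsto (fun k ↦ k ^ 2 * ∫ x in l..r, f x ^ 2) (𝓝[<] (π / (2 * (r - l))))
      (𝓝 ((π / (2 * (r - l))) ^ 2 * ∫ x in l..r, f x ^ 2)) :=
    (Continuous.tendsto (by fun_prop) _).mono_left nhdsWithin_le_nhds
  refine le_of_tendsto hlim (subcritical.mono fun k ⟨hk, hkπ⟩ ↦ ?_)
  refine sq_mul_integral_sq_le_of_mul_lt_pi_div_two hlr.le hk.le ?_ hf hff' hf' hfl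
  rwa [← lt_div_iff₀ hlen, div_div]

end Wirtinger

section WeightedEstimate

variable {l r : ℝ} {p p' p'' w w' w'' : ℝ → ℝ}

lemma integral_sub_const_sq (hw : IntervalIntegrable w volume l r)
    (hw2 : IntervalIntegrable (fun x ↦ w x ^ 2) volume l r) (m : ℝ) :
    ∫ x in l..r, (w x - m) ^ 2
      = (∫ x in l..r, w x ^ 2) - 2 * m * (∫ x in l..r, w x) + (r - l) * m ^ 2 := by
  have expand : ∀ x, (w x - m) ^ 2 = w x ^ 2 - 2 * m * w x + m ^ 2 := fun x ↦ by ring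
  simp only [expand]
  rw [intervalIntegral.integral_add (hw2.sub (hw.const_mul _)) intervalIntegrable_const,
    intervalIntegral.integral_sub hw2 (hw.const_mul _), intervalIntegral.integral_const_mul,
    intervalIntegral.integral_const, smul_eq_mul]

lemma mul_integral_sub_left_sq_le_integral_mul_deriv_sq {c : ℝ} (hlr : l < r) (hc : 0 ≤ c)
    (hcp : ∀ x ∈ Ioo l r, c ≤ p x) (hp : ContinuousOn p (Icc l r))
    (hw : ContinuousOn w (Icc l r)) (hww' : ∀ x ∈ Ioo l r, HasDerivAt w (w' x) x)
    (hw' : IntervalIntegrable (fun x ↦ w' x ^ 2) volume l r) :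
    c * ((π / (2 * (r - l))) ^ 2 * ∫ x in l..r, (w x - w l) ^ 2)
      ≤ ∫ x in l..r, p x * w' x ^ 2 :=
  calc
    c * ((π / (2 * (r - l))) ^ 2 * ∫ x in l..r, (w x - w l) ^ 2)
        ≤ c * ∫ x in l..r, w' x ^ 2 := by
      gcongr
      exact wirtinger_inequality_of_left_eq_zero hlr (hw.sub continuousOn_const)
        (fun x hx ↦ (hww' x hx).sub_const _) hw' (sub_self _)
    _ = ∫ x in l..r, c * w' x ^ 2 := (intervalIntegral.integral_const_mul _ _).symm
    _ ≤ ∫ x in l..r, p x * w' x ^ 2 := by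
      refine intervalIntegral.integral_mono_on_of_le_Ioo hlr.le (hw'.const_mul c)
        (hw'.continuousOn_mul (by rwa [uIcc_of_le hlr.le])) fun x hx ↦ ?_
      exact mul_le_mul_of_nonneg_right (hcp x hx) (sq_nonneg _)

lemma integral_deriv_deriv_mul_mul_self
    (hp : ∀ x ∈ uIcc l r, HasDerivWithinAt p (p' x) (uIcc l r) x)
    (hp' : ∀ x ∈ uIcc l r, HasDerivWithinAt p' (p'' x) (uIcc l r) x)
    (hw : ∀ x ∈ uIcc l r, HasDerivWithinAt w (w' x) (uIcc l r) x)
    (hw' : ∀ x ∈ uIcc l r, HasDerivWithinAt w' (w'' x) (uIcc l r) x)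
    (hp'' : IntervalIntegrable p'' volume l r) (hw'' : IntervalIntegrable w'' volume l r) :
    ∫ x in l..r, w'' x * p x * w x
      = w' r * p r * w r - w' l * p l * w l - 1 / 2 * (p' r * w r ^ 2 - p' l * w l ^ 2)
        + 1 / 2 * (∫ x in l..r, w x ^ 2 * p'' x) - ∫ x in l..r, p x * w' x ^ 2 := by
  have cp : ContinuousOn p (uIcc l r) := fun x hx ↦ (hp x hx).continuousWithinAt
  have cp' : ContinuousOn p' (uIcc l r) := fun x hx ↦ (hp' x hx).continuousWithinAt
  have cw : ContinuousOn w (uIcc l r) := fun x hx ↦ (hw x hx).continuousWithinAt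
  have cw' : ContinuousOn w' (uIcc l r) := fun x hx ↦ (hw' x hx).continuousWithinAt
  have icross : IntervalIntegrable (fun x ↦ p' x * (2 * w x * w' x)) volume l r :=
    ContinuousOn.intervalIntegrable (by fun_prop)
  have ienergy : IntervalIntegrable (fun x ↦ p x * w' x ^ 2) volume l r :=
    ContinuousOn.intervalIntegrable (by fun_prop)
  have first := intervalIntegral.integral_mul_deriv_eq_deriv_mul_of_hasDerivWithinAt
    (fun x hx ↦ (hp x hx).mul (hw x hx)) hw'
    (ContinuousOn.intervalIntegrable (by fun_prop)) hw''
  have second := intervalIntegral.integral_mul_deriv_eq_deriv_mul_of_hasDerivWithinAt hp'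
    (v := fun x ↦ w x ^ 2) (v' := fun x ↦ 2 * w x * w' x)
    (fun x hx ↦ ((hw x hx).pow 2).congr_deriv (by simp)) hp''
    (ContinuousOn.intervalIntegrable (by fun_prop))
  have split : ∫ x in l..r, (p' x * w x + p x * w' x) * w' x
      = 1 / 2 * (∫ x in l..r, p' x * (2 * w x * w' x)) + ∫ x in l..r, p x * w' x ^ 2 := by
    rw [← intervalIntegral.integral_const_mul,
      ← intervalIntegral.integral_add (icross.const_mul _) ienergy]
    congr with x
    ring
  calc
    ∫ x in l..r, w'' x * p x * w x = ∫ x in l..r, (p * w) x * w'' x := by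
      congr with x
      simp only [Pi.mul_apply]
      ring
    _ = _ := by
      rw [first, split, second]
      simp only [Pi.mul_apply, mul_comm (p'' _)]
      ring

theorem primal_gamma1_estimate_general {c : ℝ} (hlr : l < r) (hc : 0 ≤ c)
    (hcp : ∀ x ∈ Ioo l r, c ≤ p x)
    (hp : ∀ x ∈ Icc l r, HasDerivWithinAt p (p' x) (Icc l r) x)
    (hp' : ∀ x ∈ Icc l r, HasDerivWithinAt p' (p'' x) (Icc l r) x)
    (hw : ∀ x ∈ Icc l r, HasDerivWithinAt w (w' x) (Icc l r) x)
    (hw' : ∀ x ∈ Icc l r, HasDerivWithinAt w' (w'' x) (Icc l r) x)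
    (hp'' : IntervalIntegrable p'' volume l r) (hw'' : IntervalIntegrable w'' volume l r) :
    ∫ x in l..r, w'' x * p x * w x
      ≤ 1 / 2 * (∫ x in l..r, w x ^ 2 * (p'' x - π ^ 2 / (2 * (r - l) ^ 2) * c))
        + π ^ 2 / (2 * (r - l) ^ 2) * c * w l * (∫ x in l..r, w x)
        - 1 / 2 * p' r * w r ^ 2
        + 1 / 2 * (p' l - π ^ 2 / (2 * (r - l)) * c) * w l ^ 2
        + w' r * p r * w r - w' l * p l * w l := by
  have hIcc : uIcc l r = Icc l r := uIcc_of_le hlr.le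
  have cp : ContinuousOn p (Icc l r) := fun x hx ↦ (hp x hx).continuousWithinAt
  have cw : ContinuousOn w (Icc l r) := fun x hx ↦ (hw x hx).continuousWithinAt
  have cw' : ContinuousOn w' (Icc l r) := fun x hx ↦ (hw' x hx).continuousWithinAt
  have iw2 : IntervalIntegrable (fun x ↦ w x ^ 2) volume l r :=
    (cw.pow 2).intervalIntegrable_of_Icc hlr.le
  have iw2p'' : IntervalIntegrable (fun x ↦ w x ^ 2 * p'' x) volume l r :=
    hp''.continuousOn_mul (by rw [hIcc]; exact cw.pow 2)
  have by_parts := integral_deriv_deriv_mul_mul_self (p := p) (p' := p') (w := w) (w' := w')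
    (by rwa [hIcc]) (by rwa [hIcc]) (by rwa [hIcc]) (by rwa [hIcc]) hp'' hw''
  have energy := mul_integral_sub_left_sq_le_integral_mul_deriv_sq hlr hc hcp cp cw
    (fun x hx ↦ (hw x (Ioo_subset_Icc_self hx)).hasDerivAt (Icc_mem_nhds hx.1 hx.2))
    ((cw'.pow 2).intervalIntegrable_of_Icc hlr.le)
  rw [integral_sub_const_sq (cw.intervalIntegrable_of_Icc hlr.le) iw2] at energy
  have split (K : ℝ) : ∫ x in l..r, w x ^ 2 * (p'' x - K)
      = (∫ x in l..r, w x ^ 2 * p'' x) - K * ∫ x in l..r, w x ^ 2 := by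
    simp only [mul_sub, mul_comm _ K]
    rw [intervalIntegral.integral_sub iw2p'' (iw2.const_mul K),
      intervalIntegral.integral_const_mul]
  have hlen : r - l ≠ 0 := (sub_pos.2 hlr).ne'
  have rate_eq : (π / (2 * (r - l))) ^ 2 = π ^ 2 / (2 * (r - l) ^ 2) / 2 := by
    field_simp
  have rate_mul_length : π ^ 2 / (2 * (r - l)) = π ^ 2 / (2 * (r - l) ^ 2) * (r - l) := by
    field_simp
  rw [rate_eq] at energy
  rw [by_parts, split, rate_mul_length]
  linear_combination energy

end WeightedEstimate

lemma hasDerivAt_deriv_of_contDiff_two {𝕜 F : Type*} [NontriviallyNormedField 𝕜]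
    [NormedAddCommGroup F] [NormedSpace 𝕜 F] {f : 𝕜 → F} (hf : ContDiff 𝕜 2 f) (x : 𝕜) :
    HasDerivAt (deriv f) (iteratedDeriv 2 f x) x := by
  rw [iteratedDeriv_succ, iteratedDeriv_one]
  exact (hf.differentiable_deriv_two x).hasDerivAt

/-- Primal Γ₁ estimate from the proof of Lemma 2. -/
theorem primal_gamma1_estimate
    (a N : ℝ → ℝ) (ha : ContDiff ℝ 2 a) (hN : ContDiff ℝ 2 N)
    (α ε1 : ℝ) (hα : 0 < α) (hε1 : 0 < ε1)
    (haN : ∀ x ∈ Set.Icc (0:ℝ) 1, α * ε1 ≤ a x * N x)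
    (w : ℝ → ℝ) (hw : ContDiff ℝ 2 w) (hw0 : deriv w 0 = 0) :
    (∫ x in (0:ℝ)..1, iteratedDeriv 2 w x * a x * N x * w x)
      ≤ (1/2) * (∫ x in (0:ℝ)..1,
            (w x) ^ 2 * (iteratedDeriv 2 (fun t => a t * N t) x
              - π ^ 2 / 2 * α * ε1))
        + π ^ 2 / 2 * α * ε1 * w 0 * (∫ x in (0:ℝ)..1, w x)
        - (1/2) * (deriv a 1 * N 1 + a 1 * deriv N 1) * (w 1) ^ 2
        + (1/2) * (deriv a 0 * N 0 + a 0 * deriv N 0 - π ^ 2 / 2 * α * ε1)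
            * (w 0) ^ 2
        + deriv w 1 * a 1 * N 1 * w 1 := by
  have hp : ContDiff ℝ 2 (fun t ↦ a t * N t) := ha.mul hN
  have dp : deriv (fun t ↦ a t * N t) = fun x ↦ deriv a x * N x + a x * deriv N x :=
    funext fun x ↦ deriv_fun_mul (ha.differentiable two_ne_zero x) (hN.differentiable two_ne_zero x)
  have estimate := primal_gamma1_estimate_general zero_lt_one (mul_pos hα hε1).le
    (fun x hx ↦ haN x (Ioo_subset_Icc_self hx))
    (fun x _ ↦ (hp.differentiable two_ne_zero x).hasDerivAt.hasDerivWithinAt)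
    (fun x _ ↦ (hasDerivAt_deriv_of_contDiff_two hp x).hasDerivWithinAt)
    (fun x _ ↦ (hw.differentiable two_ne_zero x).hasDerivAt.hasDerivWithinAt)
    (fun x _ ↦ (hasDerivAt_deriv_of_contDiff_two hw x).hasDerivWithinAt)
    ((hp.continuous_iteratedDeriv 2 le_rfl).intervalIntegrable 0 1)
    ((hw.continuous_iteratedDeriv 2 le_rfl).intervalIntegrable 0 1)
  simpa [dp, hw0, mul_assoc] using estimate
end

section
/- (Primal Γ3 identity from the proof of Lemma 2.) Let a : [0,1] → ℝ be twice continuously differentiable, P1, P2 : [0,1]² → ℝ twice continuously differentiable with P1(x,ξ) = P2(ξ,x) for all x, ξ, and w : [0,1] → ℝ twice continuously differentiable with w'(0) = 0. Then ∫₀¹ w''(x)·a(x)·[∫₀^x P1(x,ξ)w(ξ)dξ + ∫_x^1 P2(x,ξ)w(ξ)dξ] dx = ∫₀¹ w(x)²·[∂/∂x (a(x)(P1(x,ξ) − P2(x,ξ)))]evaluated at ξ = x dx + (1/2)∫₀¹∫₀^x w(x)·[∂²/∂x²(a(x)P1(x,ξ)) + ∂²/∂ξ²(a(ξ)P1(x,ξ))]·w(ξ)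 dξ dx + (1/2)∫₀¹∫_x^1 w(x)·[∂²/∂x²(a(x)P2(x,ξ)) + ∂²/∂ξ²(a(ξ)P2(x,ξ))]·w(ξ) dξ dx − w(1)·∫₀¹ [a'(1)P1(1,ξ) + a(1)·∂P1/∂x(1,ξ)]·w(ξ) dξ + w(0)·∫₀¹ [a'(0)P2(0,ξ) + a(0)·∂P2/∂x(0,ξ)]·w(ξ) dξ + w'(1)·∫₀¹ a(1)·P1(1,ξ)·w(ξ) dξ. -/
open MeasureTheory

/-!
Put `K w x = ∫ ξ in α..x, Q x ξ * w ξ + ∫ ξ in x..β, R x ξ * w ξ` with `Q x ξ = a x * P1 x ξ` and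
`R x ξ = a x * P2 x ξ`. The two kernels agree on the diagonal, so by the Leibniz rule `(K w)'` is
the same kind of integral with the kernels `∂Q`, `∂R`, while differentiating once more picks up
their jump `(∂Q x x - ∂R x x) * w x` across the diagonal. Green's formula moves both derivatives of
`w''` onto `K w`; the remaining quadratic form in `∂²Q`, `∂²R` is symmetrized by exchanging the
order of integration over the two triangles.
-/

section TriangleSwap

variable {E : Type*} [NormedAddCommGroup E] [NormedSpace ℝ E] {α β : ℝ}

theorem intervalIntegral_indicator_Ici {f : ℝ → E} {c : ℝ} (hc : c ∈ Set.Icc α β) :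
    ∫ x in α..β, (Set.Ici c).indicator f x = ∫ x in c..β, f x := by
  have hIcc : Set.Icc α β ∩ Set.Ici c = Set.Icc c β := by
    rw [← Set.Ici_inter_Iic, Set.inter_right_comm, Set.Ici_inter_Ici, sup_eq_right.2 hc.1,
      Set.Ici_inter_Iic]
  rw [intervalIntegral.integral_of_le (hc.1.trans hc.2), intervalIntegral.integral_of_le hc.2,
    ← integral_Icc_eq_integral_Ioc, ← integral_Icc_eq_integral_Ioc,
    setIntegral_indicator measurableSet_Ici, hIcc]

theorem intervalIntegral_triangle_swap_of_le {f : ℝ → ℝ → E} (hαβ : α ≤ β)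
    (hf : IntegrableOn f.uncurry (Set.uIoc α β ×ˢ Set.uIoc α β)) :
    ∫ x in α..β, ∫ ξ in α..x, f x ξ = ∫ ξ in α..β, ∫ x in ξ..β, f x ξ := by
  let g : ℝ → ℝ → E := fun x ξ => {p : ℝ × ℝ | p.2 ≤ p.1}.indicator f.uncurry (x, ξ)
  have hg : IntegrableOn g.uncurry (Set.uIoc α β ×ˢ Set.uIoc α β) :=
    hf.indicator (measurableSet_le measurable_snd measurable_fst)
  calc ∫ x in α..β, ∫ ξ in α..x, f x ξ
      = ∫ x in α..β, ∫ ξ in α..β, g x ξ := by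
        refine intervalIntegral.integral_congr fun x hx => ?_
        rw [Set.uIcc_of_le hαβ] at hx
        exact (intervalIntegral.integral_indicator hx).symm
    _ = ∫ ξ in α..β, ∫ x in α..β, g x ξ := intervalIntegral_intervalIntegral_swap hg
    _ = ∫ ξ in α..β, ∫ x in ξ..β, f x ξ := by
        refine intervalIntegral.integral_congr fun ξ hξ => ?_
        rw [Set.uIcc_of_le hαβ] at hξ
        exact intervalIntegral_indicator_Ici hξ

theorem intervalIntegral_triangle_swap {f : ℝ → ℝ → E}
    (hf : IntegrableOn f.uncurry (Set.uIoc α β ×ˢ Set.uIoc α β)) :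
    ∫ x in α..β, ∫ ξ in α..x, f x ξ = ∫ ξ in α..β, ∫ x in ξ..β, f x ξ := by
  rcases le_total α β with hαβ | hβα
  · exact intervalIntegral_triangle_swap_of_le hαβ hf
  · have hf_swap : IntegrableOn (Function.uncurry fun ξ x => f x ξ)
        (Set.uIoc β α ×ˢ Set.uIoc β α) := by
      rw [Set.uIoc_comm β α]
      exact hf.swap
    calc ∫ x in α..β, ∫ ξ in α..x, f x ξ
        = ∫ x in β..α, ∫ ξ in x..α, f x ξ := by
          simp_rw [intervalIntegral.integral_symm β α, intervalIntegral.integral_symm _ α,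
            intervalIntegral.integral_neg, neg_neg]
      _ = ∫ ξ in β..α, ∫ x in β..ξ, f x ξ :=
          (intervalIntegral_triangle_swap_of_le hβα hf_swap).symm
      _ = ∫ ξ in α..β, ∫ x in ξ..β, f x ξ := by
          simp_rw [intervalIntegral.integral_symm α β, intervalIntegral.integral_symm β _,
            intervalIntegral.integral_neg]

end TriangleSwap

theorem integrableOn_prod_uIoc_of_continuous {E : Type*} [NormedAddCommGroup E] {f : ℝ × ℝ → E}
    (hf : Continuous f) (α β γ δ : ℝ) : IntegrableOn f (Set.uIoc α β ×ˢ Set.uIoc γ δ) :=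
  (hf.continuousOn.integrableOn_compact (isCompact_uIcc.prod isCompact_uIcc)).mono_set
    (Set.prod_mono Set.uIoc_subset_uIcc Set.uIoc_subset_uIcc)

theorem continuous_parametric_intervalIntegral_left {X E : Type*} [TopologicalSpace X]
    [NormedAddCommGroup E] [NormedSpace ℝ E] {f : X → ℝ → E} (hf : Continuous f.uncurry)
    {s : X → ℝ} (hs : Continuous s) (b : ℝ) : Continuous fun x => ∫ t in s x..b, f x t := by
  simp_rw [intervalIntegral.integral_symm b]
  fun_prop

section LeibnizRule

variable {E : Type*} [NormedAddCommGroup E] [NormedSpace ℝ E] [CompleteSpace E]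

theorem hasDerivAt_integral_of_hasDerivAt_fst {f f' : ℝ → ℝ → E}
    (hf : Continuous f.uncurry) (hf' : Continuous f'.uncurry)
    (hderiv : ∀ x ξ, HasDerivAt (fun t => f t ξ) (f' x ξ) x) (c x : ℝ) :
    HasDerivAt (fun y => ∫ ξ in c..y, f y ξ) (f x x + ∫ ξ in c..x, f' x ξ) x := by
  have hdiag : Continuous fun ξ => f ξ ξ := hf.comp (continuous_id.prodMk continuous_id)
  have htri : Continuous fun t => ∫ ξ in c..t, f' t ξ := by fun_prop
  have htri' (y : ℝ) : Continuous fun ξ => ∫ t in ξ..y, f' t ξ := by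
    have hflip : Continuous (Function.uncurry fun ξ t => f' t ξ) := hf'.comp continuous_swap
    exact continuous_parametric_intervalIntegral_left hflip continuous_id y
  -- Expanding `f y ξ = f ξ ξ + ∫ t in ξ..y, f' t ξ` and exchanging the order of integration makes
  -- `y` occur only as the upper limit, so that the fundamental theorem of calculus applies.
  have hprimitive (y : ℝ) : ∫ ξ in c..y, f y ξ = ∫ t in c..y, (f t t + ∫ ξ in c..t, f' t ξ) :=
    calc ∫ ξ in c..y, f y ξ
        = ∫ ξ in c..y, (f ξ ξ + ∫ t in ξ..y, f' t ξ) := by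
          refine intervalIntegral.integral_congr fun ξ _ => ?_
          have hcont : Continuous fun t => f' t ξ := by fun_prop
          simp only [intervalIntegral.integral_eq_sub_of_hasDerivAt
            (fun t _ => hderiv t ξ) (hcont.intervalIntegrable ξ y), add_sub_cancel]
      _ = ∫ t in c..y, (f t t + ∫ ξ in c..t, f' t ξ) := by
          rw [intervalIntegral.integral_add (hdiag.intervalIntegrable c y)
              ((htri' y).intervalIntegrable c y),
            intervalIntegral.integral_add (hdiag.intervalIntegrable c y)
              (htri.intervalIntegrable c y),
            intervalIntegral_triangle_swap (integrableOn_prod_uIoc_of_continuous hf' c y c y)]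
  simp_rw [hprimitive]
  exact (hdiag.add htri).integral_hasStrictDerivAt c x |>.hasDerivAt

end LeibnizRule

theorem integral_deriv2_mul_eq_sub_add_integral_mul_deriv2 {A : Type*} [NormedRing A]
    [NormedAlgebra ℝ A] [CompleteSpace A] {u u' u'' v v' v'' : ℝ → A} {α β : ℝ}
    (hu : ∀ x ∈ Set.uIcc α β, HasDerivAt u (u' x) x)
    (hu' : ∀ x ∈ Set.uIcc α β, HasDerivAt u' (u'' x) x)
    (hv : ∀ x ∈ Set.uIcc α β, HasDerivAt v (v' x) x)
    (hv' : ∀ x ∈ Set.uIcc α β, HasDerivAt v' (v'' x) x)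
    (hu'' : IntervalIntegrable u'' volume α β) (hv'' : IntervalIntegrable v'' volume α β) :
    ∫ x in α..β, u'' x * v x =
      (u' β * v β - u' α * v α) - (u β * v' β - u α * v' α) + ∫ x in α..β, u x * v'' x := by
  have hu'_int : IntervalIntegrable u' volume α β :=
    ContinuousOn.intervalIntegrable fun x hx => (hu' x hx).continuousAt.continuousWithinAt
  have hv'_int : IntervalIntegrable v' volume α β :=
    ContinuousOn.intervalIntegrable fun x hx => (hv' x hx).continuousAt.continuousWithinAt
  rw [intervalIntegral.integral_mul_deriv_eq_deriv_mul hu hv' hu'_int hv'',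
    intervalIntegral.integral_mul_deriv_eq_deriv_mul hu' hv hu'' hv'_int]
  abel

section PartialDerivative

variable {E : Type*} [NormedAddCommGroup E] [NormedSpace ℝ E] {f : ℝ → ℝ → E}

/-- The partial derivative of a curried function of two real variables in its first variable,
again in curried form so that it can be iterated. -/
noncomputable def partialFst (f : ℝ → ℝ → E) (x ξ : ℝ) : E :=
  deriv (fun t => f t ξ) x

theorem iteratedDeriv_two_eq_partialFst (f : ℝ → ℝ → E) (x ξ : ℝ) :
    iteratedDeriv 2 (fun t => f t ξ) x = partialFst (partialFst f) x ξ := by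
  rw [iteratedDeriv_succ, iteratedDeriv_one]
  rfl

theorem contDiff_partialFst {m n : WithTop ℕ∞} (hf : ContDiff ℝ n f.uncurry) (hmn : m + 1 ≤ n) :
    ContDiff ℝ m (partialFst f).uncurry := by
  have hflip : ContDiff ℝ n (Function.uncurry fun (p : ℝ × ℝ) t => f t p.2) :=
    hf.comp (contDiff_snd.prodMk (contDiff_snd.comp contDiff_fst))
  exact (hflip.fderiv contDiff_fst hmn).clm_apply contDiff_const

theorem continuous_partialFst (hf : ContDiff ℝ 1 f.uncurry) :
    Continuous (partialFst f).uncurry :=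
  (contDiff_partialFst hf (zero_add 1).le).continuous

theorem hasDerivAt_partialFst (hf : Differentiable ℝ f.uncurry) (x ξ : ℝ) :
    HasDerivAt (fun t => f t ξ) (partialFst f x ξ) x := by
  have hsection : Differentiable ℝ fun t => f t ξ :=
    hf.comp (differentiable_id.prodMk (differentiable_const ξ))
  exact (hsection x).hasDerivAt

theorem partialFst_mul {a : ℝ → ℝ} {P : ℝ → ℝ → ℝ} (ha : Differentiable ℝ a)
    (hP : Differentiable ℝ P.uncurry) (x ξ : ℝ) :
    partialFst (fun t s => a t * P t s) x ξ =
      deriv a x * P x ξ + a x * deriv (fun t => P t ξ) x :=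
  deriv_fun_mul (ha x) (hasDerivAt_partialFst hP x ξ).differentiableAt

theorem deriv_mul_sub_eq_partialFst_sub {a : ℝ → ℝ} {P₁ P₂ : ℝ → ℝ → ℝ} (ha : Differentiable ℝ a)
    (hP₁ : Differentiable ℝ P₁.uncurry) (hP₂ : Differentiable ℝ P₂.uncurry) (x ξ : ℝ) :
    deriv (fun t => a t * (P₁ t ξ - P₂ t ξ)) x =
      partialFst (fun t s => a t * P₁ t s) x ξ - partialFst (fun t s => a t * P₂ t s) x ξ := by
  have hdiff {P : ℝ → ℝ → ℝ} (hP : Differentiable ℝ P.uncurry) :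
      DifferentiableAt ℝ (fun t => a t * P t ξ) x :=
    (ha x).fun_mul (hasDerivAt_partialFst hP x ξ).differentiableAt
  simp only [mul_sub, partialFst]
  exact deriv_fun_sub (hdiff hP₁) (hdiff hP₂)

end PartialDerivative

section SplitKernelIntegral

/-- The integral operator on `[α, β]` whose kernel is `Q x ξ` below the diagonal (`ξ < x`) and
`R x ξ` above it, applied to `w`. -/
noncomputable def splitKernelIntegral (α β : ℝ) (Q R : ℝ → ℝ → ℝ) (w : ℝ → ℝ) (x : ℝ) : ℝ :=
  (∫ ξ in α..x, Q x ξ * w ξ) + ∫ ξ in x..β, R x ξ * w ξ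

variable {α β : ℝ} {Q R : ℝ → ℝ → ℝ} {u w : ℝ → ℝ}

theorem splitKernelIntegral_left :
    splitKernelIntegral α β Q R w α = ∫ ξ in α..β, R α ξ * w ξ := by
  simp [splitKernelIntegral]

theorem splitKernelIntegral_right :
    splitKernelIntegral α β Q R w β = ∫ ξ in α..β, Q β ξ * w ξ := by
  simp [splitKernelIntegral]

theorem splitKernelIntegral_mul_left (a : ℝ → ℝ) (x : ℝ) :
    splitKernelIntegral α β (fun t ξ => a t * Q t ξ) (fun t ξ => a t * R t ξ) w x =
      a x * splitKernelIntegral α β Q R w x := by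
  simp only [splitKernelIntegral, mul_assoc, intervalIntegral.integral_const_mul, mul_add]

theorem continuous_splitKernelIntegral (hQ : Continuous Q.uncurry) (hR : Continuous R.uncurry)
    (hw : Continuous w) : Continuous (splitKernelIntegral α β Q R w) := by
  have hRw : Continuous (Function.uncurry fun x ξ => R x ξ * w ξ) := by fun_prop
  have hlower : Continuous fun x => ∫ ξ in α..x, Q x ξ * w ξ := by fun_prop
  exact hlower.add (continuous_parametric_intervalIntegral_left hRw continuous_id β)

theorem hasDerivAt_splitKernelIntegral (hQ : ContDiff ℝ 1 Q.uncurry)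
    (hR : ContDiff ℝ 1 R.uncurry) (hw : Continuous w) (x : ℝ) :
    HasDerivAt (splitKernelIntegral α β Q R w)
      ((Q x x - R x x) * w x + splitKernelIntegral α β (partialFst Q) (partialFst R) w x) x := by
  have leibniz {K : ℝ → ℝ → ℝ} (hK : ContDiff ℝ 1 K.uncurry) (c : ℝ) :
      HasDerivAt (fun y => ∫ ξ in c..y, K y ξ * w ξ)
        (K x x * w x + ∫ ξ in c..x, partialFst K x ξ * w ξ) x := by
    have hK_cont := hK.continuous
    have hK'_cont := continuous_partialFst hK
    exact hasDerivAt_integral_of_hasDerivAt_fst (by fun_prop) (by fun_prop)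
      (fun t ξ => (hasDerivAt_partialFst (hK.differentiable one_ne_zero) t ξ).mul_const (w ξ))
      c x
  have hsplit : splitKernelIntegral α β Q R w =
      fun y => (∫ ξ in α..y, Q y ξ * w ξ) - ∫ ξ in β..y, R y ξ * w ξ := by
    ext y
    rw [splitKernelIntegral, intervalIntegral.integral_symm β y, sub_eq_add_neg]
  rw [hsplit]
  refine ((leibniz hQ α).sub (leibniz hR β)).congr_deriv ?_
  rw [splitKernelIntegral, intervalIntegral.integral_symm β x]
  ring

theorem integral_deriv2_mul_splitKernelIntegral (hQ : ContDiff ℝ 2 Q.uncurry)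
    (hR : ContDiff ℝ 2 R.uncurry) (hdiag : ∀ x, Q x x = R x x) (hu : ContDiff ℝ 2 u)
    (hw : Continuous w) :
    ∫ x in α..β, iteratedDeriv 2 u x * splitKernelIntegral α β Q R w x =
      (∫ x in α..β, u x * ((partialFst Q x x - partialFst R x x) * w x))
        + (∫ x in α..β, u x *
            splitKernelIntegral α β (partialFst (partialFst Q)) (partialFst (partialFst R)) w x)
        - u β * (∫ ξ in α..β, partialFst Q β ξ * w ξ)
        + u α * (∫ ξ in α..β, partialFst R α ξ * w ξ)
        + deriv u β * (∫ ξ in α..β, Q β ξ * w ξ)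
        - deriv u α * (∫ ξ in α..β, R α ξ * w ξ) := by
  have hQ' : ContDiff ℝ 1 (partialFst Q).uncurry := contDiff_partialFst hQ one_add_one_eq_two.le
  have hR' : ContDiff ℝ 1 (partialFst R).uncurry := contDiff_partialFst hR one_add_one_eq_two.le
  have hQ'_cont := hQ'.continuous
  have hR'_cont := hR'.continuous
  have hu' (x : ℝ) : HasDerivAt (deriv u) (iteratedDeriv 2 u x) x := by
    rw [iteratedDeriv_succ, iteratedDeriv_one]
    exact (hu.differentiable_deriv_two x).hasDerivAt
  have hV (x : ℝ) : HasDerivAt (splitKernelIntegral α β Q R w)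
      (splitKernelIntegral α β (partialFst Q) (partialFst R) w x) x := by
    simpa [hdiag] using hasDerivAt_splitKernelIntegral (hQ.of_le one_le_two)
      (hR.of_le one_le_two) hw x
  have hV''_cont := continuous_splitKernelIntegral (α := α) (β := β)
    (continuous_partialFst hQ') (continuous_partialFst hR') hw
  have hjump_cont : Continuous fun x => (partialFst Q x x - partialFst R x x) * w x := by
    fun_prop
  rw [integral_deriv2_mul_eq_sub_add_integral_mul_deriv2
      (fun x _ => (hu.differentiable two_ne_zero x).hasDerivAt) (fun x _ => hu' x)
      (fun x _ => hV x) (fun x _ => hasDerivAt_splitKernelIntegral hQ' hR' hw x)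
      ((hu.continuous_iteratedDeriv 2 le_rfl).intervalIntegrable α β)
      ((hjump_cont.add hV''_cont).intervalIntegrable α β)]
  simp only [mul_add, splitKernelIntegral_left, splitKernelIntegral_right]
  rw [intervalIntegral.integral_add
    (Continuous.intervalIntegrable (hu.continuous.fun_mul hjump_cont) α β)
    (Continuous.intervalIntegrable (hu.continuous.fun_mul hV''_cont) α β)]
  ring

theorem integral_upperTriangle_eq_lowerTriangle (hw : Continuous w) (hQ : Continuous Q.uncurry) :
    ∫ x in α..β, ∫ ξ in x..β, w x * Q x ξ * w ξ =
      ∫ x in α..β, ∫ ξ in α..x, w x * Q ξ x * w ξ := by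
  have hswapped : Continuous (Function.uncurry fun x ξ => w x * Q ξ x * w ξ) := by fun_prop
  rw [intervalIntegral_triangle_swap (integrableOn_prod_uIoc_of_continuous hswapped α β α β)]
  simp only [mul_comm, mul_left_comm]

theorem integral_mul_splitKernelIntegral_eq_lowerTriangle (hQ : Continuous Q.uncurry)
    (hR : Continuous R.uncurry) (hw : Continuous w) :
    ∫ x in α..β, w x * splitKernelIntegral α β Q R w x =
      ∫ x in α..β, ∫ ξ in α..x, w x * (Q x ξ + R ξ x) * w ξ := by
  have hlower {K : ℝ → ℝ → ℝ} (hK : Continuous K.uncurry) :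
      IntervalIntegrable (fun x => ∫ ξ in α..x, w x * K x ξ * w ξ) volume α β :=
    Continuous.intervalIntegrable (by fun_prop) α β
  have hR_flip : Continuous (Function.uncurry fun x ξ => R ξ x) := by fun_prop
  have hupper : IntervalIntegrable (fun x => ∫ ξ in x..β, w x * R x ξ * w ξ) volume α β := by
    have hcont : Continuous (Function.uncurry fun x ξ => w x * R x ξ * w ξ) := by fun_prop
    exact (continuous_parametric_intervalIntegral_left hcont continuous_id β).intervalIntegrable α β
  calc ∫ x in α..β, w x * splitKernelIntegral α β Q R w x
      = ∫ x in α..β, ((∫ ξ in α..x, w x * Q x ξ * w ξ) + ∫ ξ in x..β, w x * R x ξ * w ξ) := by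
        simp only [splitKernelIntegral, mul_add, mul_assoc, intervalIntegral.integral_const_mul]
    _ = (∫ x in α..β, ∫ ξ in α..x, w x * Q x ξ * w ξ) +
          ∫ x in α..β, ∫ ξ in α..x, w x * R ξ x * w ξ := by
        rw [intervalIntegral.integral_add (hlower hQ) hupper,
          integral_upperTriangle_eq_lowerTriangle hw hR]
    _ = ∫ x in α..β, ∫ ξ in α..x, w x * (Q x ξ + R ξ x) * w ξ := by
        rw [← intervalIntegral.integral_add (hlower hQ) (hlower hR_flip)]
        congr! 2 with x
        rw [← intervalIntegral.integral_add (Continuous.intervalIntegrable (by fun_prop) α x)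
          (Continuous.intervalIntegrable (by fun_prop) α x)]
        simp only [mul_add, add_mul]

theorem integral_mul_splitKernelIntegral_symmetrize (hQ : Continuous Q.uncurry)
    (hR : Continuous R.uncurry) (hw : Continuous w) :
    ∫ x in α..β, w x * splitKernelIntegral α β Q R w x =
      (1 / 2) * (∫ x in α..β, ∫ ξ in α..x, w x * (Q x ξ + R ξ x) * w ξ)
        + (1 / 2) * (∫ x in α..β, ∫ ξ in x..β, w x * (R x ξ + Q ξ x) * w ξ) := by
  have hsum : Continuous (Function.uncurry fun x ξ => R x ξ + Q ξ x) := by fun_prop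
  rw [integral_upperTriangle_eq_lowerTriangle hw hsum,
    integral_mul_splitKernelIntegral_eq_lowerTriangle hQ hR hw]
  simp only [add_comm (R _ _)]
  ring

theorem integral_deriv2_mul_splitKernelIntegral_self (hQ : ContDiff ℝ 2 Q.uncurry)
    (hR : ContDiff ℝ 2 R.uncurry) (hdiag : ∀ x, Q x x = R x x) (hw : ContDiff ℝ 2 w) :
    ∫ x in α..β, iteratedDeriv 2 w x * splitKernelIntegral α β Q R w x =
      (∫ x in α..β, w x ^ 2 * (partialFst Q x x - partialFst R x x))
        + (1 / 2) * (∫ x in α..β, ∫ ξ in α..x,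
            w x * (partialFst (partialFst Q) x ξ + partialFst (partialFst R) ξ x) * w ξ)
        + (1 / 2) * (∫ x in α..β, ∫ ξ in x..β,
            w x * (partialFst (partialFst R) x ξ + partialFst (partialFst Q) ξ x) * w ξ)
        - w β * (∫ ξ in α..β, partialFst Q β ξ * w ξ)
        + w α * (∫ ξ in α..β, partialFst R α ξ * w ξ)
        + deriv w β * (∫ ξ in α..β, Q β ξ * w ξ)
        - deriv w α * (∫ ξ in α..β, R α ξ * w ξ) := by
  have hjump (x : ℝ) : w x ^ 2 * (partialFst Q x x - partialFst R x x) =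
      w x * ((partialFst Q x x - partialFst R x x) * w x) := by ring
  rw [integral_deriv2_mul_splitKernelIntegral hQ hR hdiag hw hw.continuous,
    integral_mul_splitKernelIntegral_symmetrize
      (continuous_partialFst (contDiff_partialFst hQ one_add_one_eq_two.le))
      (continuous_partialFst (contDiff_partialFst hR one_add_one_eq_two.le)) hw.continuous]
  simp only [hjump]
  ring

end SplitKernelIntegral

theorem primal_gamma3_identity_general (α β : ℝ) {a : ℝ → ℝ} (ha : ContDiff ℝ 2 a)
    {P1 P2 : ℝ → ℝ → ℝ} (hP1 : ContDiff ℝ 2 P1.uncurry) (hsym : ∀ x ξ, P1 x ξ = P2 ξ x)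
    {w : ℝ → ℝ} (hw : ContDiff ℝ 2 w) :
    (∫ x in α..β, iteratedDeriv 2 w x * a x *
        ((∫ ξ in α..x, P1 x ξ * w ξ) + ∫ ξ in x..β, P2 x ξ * w ξ))
      = (∫ x in α..β, (w x) ^ 2 * deriv (fun t => a t * (P1 t x - P2 t x)) x)
        + (1 / 2) * (∫ x in α..β, ∫ ξ in α..x,
            w x * (iteratedDeriv 2 (fun t => a t * P1 t ξ) x
              + iteratedDeriv 2 (fun s => a s * P1 x s) ξ) * w ξ)
        + (1 / 2) * (∫ x in α..β, ∫ ξ in x..β,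
            w x * (iteratedDeriv 2 (fun t => a t * P2 t ξ) x
              + iteratedDeriv 2 (fun s => a s * P2 x s) ξ) * w ξ)
        - w β * (∫ ξ in α..β,
            (deriv a β * P1 β ξ + a β * deriv (fun t => P1 t ξ) β) * w ξ)
        + w α * (∫ ξ in α..β,
            (deriv a α * P2 α ξ + a α * deriv (fun t => P2 t ξ) α) * w ξ)
        + deriv w β * (∫ ξ in α..β, a β * P1 β ξ * w ξ)
        - deriv w α * (∫ ξ in α..β, a α * P2 α ξ * w ξ) := by
  have hP2 : ContDiff ℝ 2 P2.uncurry := by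
    have hflip : P2.uncurry = fun p => P1.uncurry p.swap := funext fun p => (hsym p.2 p.1).symm
    exact hflip ▸ hP1.comp (contDiff_snd.prodMk contDiff_fst)
  let Q : ℝ → ℝ → ℝ := fun x ξ => a x * P1 x ξ
  let R : ℝ → ℝ → ℝ := fun x ξ => a x * P2 x ξ
  have hQ : ContDiff ℝ 2 Q.uncurry := (ha.comp contDiff_fst).mul hP1
  have hR : ContDiff ℝ 2 R.uncurry := (ha.comp contDiff_fst).mul hP2
  have hlhs (x : ℝ) : iteratedDeriv 2 w x * a x *
      ((∫ ξ in α..x, P1 x ξ * w ξ) + ∫ ξ in x..β, P2 x ξ * w ξ) =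
        iteratedDeriv 2 w x * splitKernelIntegral α β Q R w x := by
    rw [splitKernelIntegral_mul_left, mul_assoc, splitKernelIntegral]
  have hQ_fst (x ξ : ℝ) : iteratedDeriv 2 (fun t => a t * P1 t ξ) x =
      partialFst (partialFst Q) x ξ := iteratedDeriv_two_eq_partialFst Q x ξ
  have hR_fst (x ξ : ℝ) : iteratedDeriv 2 (fun t => a t * P2 t ξ) x =
      partialFst (partialFst R) x ξ := iteratedDeriv_two_eq_partialFst R x ξ
  have hQ_snd (x ξ : ℝ) : iteratedDeriv 2 (fun s => a s * P1 x s) ξ =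
      partialFst (partialFst R) ξ x := by simp only [hsym, hR_fst]
  have hR_snd (x ξ : ℝ) : iteratedDeriv 2 (fun s => a s * P2 x s) ξ =
      partialFst (partialFst Q) ξ x := by simp only [← hsym, hQ_fst]
  have ha' : Differentiable ℝ a := ha.differentiable two_ne_zero
  have hP1' : Differentiable ℝ P1.uncurry := hP1.differentiable two_ne_zero
  have hP2' : Differentiable ℝ P2.uncurry := hP2.differentiable two_ne_zero
  simp only [hlhs, hQ_fst, hR_fst, hQ_snd, hR_snd, deriv_mul_sub_eq_partialFst_sub ha' hP1' hP2',
    ← partialFst_mul ha' hP1', ← partialFst_mul ha' hP2']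
  exact integral_deriv2_mul_splitKernelIntegral_self hQ hR (fun x => by simp only [Q, R, hsym]) hw

/-- Primal Γ₃ identity from the proof of Lemma 2. -/
theorem primal_gamma3_identity
    (a : ℝ → ℝ) (ha : ContDiff ℝ 2 a)
    (P1 P2 : ℝ → ℝ → ℝ)
    (hP1 : ContDiff ℝ 2 (fun p : ℝ × ℝ => P1 p.1 p.2))
    (hP2 : ContDiff ℝ 2 (fun p : ℝ × ℝ => P2 p.1 p.2))
    (hsym : ∀ x ξ : ℝ, P1 x ξ = P2 ξ x)
    (w : ℝ → ℝ) (hw : ContDiff ℝ 2 w) (hw0 : deriv w 0 = 0) :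
    (∫ x in (0:ℝ)..1, iteratedDeriv 2 w x * a x *
        ((∫ ξ in (0:ℝ)..x, P1 x ξ * w ξ) + ∫ ξ in x..(1:ℝ), P2 x ξ * w ξ))
      = (∫ x in (0:ℝ)..1,
            (w x) ^ 2 * deriv (fun t => a t * (P1 t x - P2 t x)) x)
        + (1/2) * (∫ x in (0:ℝ)..1, ∫ ξ in (0:ℝ)..x,
            w x * (iteratedDeriv 2 (fun t => a t * P1 t ξ) x
              + iteratedDeriv 2 (fun s => a s * P1 x s) ξ) * w ξ)
        + (1/2) * (∫ x in (0:ℝ)..1, ∫ ξ in x..(1:ℝ),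
            w x * (iteratedDeriv 2 (fun t => a t * P2 t ξ) x
              + iteratedDeriv 2 (fun s => a s * P2 x s) ξ) * w ξ)
        - w 1 * (∫ ξ in (0:ℝ)..1,
            (deriv a 1 * P1 1 ξ + a 1 * deriv (fun t => P1 t ξ) 1) * w ξ)
        + w 0 * (∫ ξ in (0:ℝ)..1,
            (deriv a 0 * P2 0 ξ + a 0 * deriv (fun t => P2 t ξ) 0) * w ξ)
        + deriv w 1 * (∫ ξ in (0:ℝ)..1, a 1 * P1 1 ξ * w ξ) := by
  rw [primal_gamma3_identity_general 0 1 ha hP1 hsym hw, hw0, zero_mul, sub_zero]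
end
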